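/- Define on W the composite odd operators E13 := E12 E23 − q^{−1} E23 E12 and E31 := −(E21 E32 − q^{−1} E32 E21). Then the q-Serre relations hold as operator identities on W: E12 E13 − q E13 E12 = 0 and E21 E31 − q E31 E21 = 0; moreover E13 ∘ E13 = 0 and E31 ∘ E31 = 0. -/

import Mathlib

/-!
Put `t x = √[m13 - x]` and `r x = √[x - m23 + 1]`. Every matrix element of `E12` and `E21` is a
product of one value of `t` and one value of `r`, and every matrix element of `E23` and `E32`
between two sectors is a constant times `t x` or `r x`; these formulas are valid for every integer
`x`, since the coefficient vanishes whenever the source is out of range and the target is not.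

In the cubic combination `a² e - (q + q⁻¹) a e a + e a²`, with `(a, e) = (E12, E23)` or
`(E21, E32)`, each matrix element has as a factor a second difference such as
`r x ^ 2 - (q + q⁻¹) r (x + 1) ^ 2 + r (x + 2) ^ 2`, which vanishes by the recurrence
`[y] + [y + 2] = (q + q⁻¹) [y + 1]` (`serre_raise`, `serre_lower`). The two paths between the
sectors `0` and `3` cancel, so `e² = 0` (`E23_sq`, `E32_sq`).

The rest is formal: the cubic relation is the `q`-Serre relation for the `q`-commutator
`a e - q⁻¹ e a` (`serre_qcomm`), and together with `e² = 0` it makes that `q`-commutator square to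
zero (`qcomm_sq`).
-/

noncomputable section

/-- The `q`-number `[x] = (q^x - q^(-x))/(q - q⁻¹)`. -/
def qn (q : ℝ) (x : ℤ) : ℝ := (q ^ x - q ^ (-x)) / (q - q⁻¹)

/-- The triple `(m12, m22, m32)` attached to the sector `k ∈ {0,1,2,3}`. -/
def trip (m13 m23 m33 : ℤ) : Fin 4 → ℤ × ℤ × ℤ
  | 0 => (m13, m23, m33)
  | 1 => (m13, m23 - 1, m33 + 1)
  | 2 => (m13 - 1, m23, m33 + 1)
  | 3 => (m13 - 1, m23 - 1, m33 + 2)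

def M12 (m13 m23 m33 : ℤ) (k : Fin 4) : ℤ := (trip m13 m23 m33 k).1
def M22 (m13 m23 m33 : ℤ) (k : Fin 4) : ℤ := (trip m13 m23 m33 k).2.1
def M32 (m13 m23 m33 : ℤ) (k : Fin 4) : ℤ := (trip m13 m23 m33 k).2.2

/-- `m11` is in the allowed range `m22 ≤ m11 ≤ m12` of the sector `k`. -/
def InR (m13 m23 m33 : ℤ) (k : Fin 4) (x : ℤ) : Prop :=
  M22 m13 m23 m33 k ≤ x ∧ x ≤ M12 m13 m23 m33 k

instance (m13 m23 m33 : ℤ) (k : Fin 4) (x : ℤ) : Decidable (InR m13 m23 m33 k x) :=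
  instDecidableAnd

/-- The index set of the basis `v(k, m11)` of `W`. -/
abbrev Idx (m13 m23 m33 : ℤ) : Type :=
  {p : Fin 4 × ℤ // InR m13 m23 m33 p.1 p.2}

/-- The module `W = W^q([m13,m23,m33])`, realized as the free complex vector
space on the basis `v(k, m11)`, `k ∈ {0,1,2,3}`, `m22 ≤ m11 ≤ m12`. -/
abbrev Wsp (m13 m23 m33 : ℤ) : Type := Idx m13 m23 m33 →₀ ℂ

/-- The basis vector `v(k, m11)` (zero if `m11` is out of range). -/
def bv (m13 m23 m33 : ℤ) (k : Fin 4) (x : ℤ) : Wsp m13 m23 m33 :=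
  if h : InR m13 m23 m33 k x then Finsupp.single ⟨(k, x), h⟩ 1 else 0

/-- The sector `V_k`, the span of the `v(k, ·)`. -/
def Vk (m13 m23 m33 : ℤ) (k : Fin 4) : Submodule ℂ (Wsp m13 m23 m33) :=
  Submodule.span ℂ (Set.range (bv m13 m23 m33 k))

/-- The Gel'fand--Zetlin realization of the induced `U_q[gl(2/1)]`-module
`W^q([m13,m23,m33])`: seven linear operators acting on the basis `v(k, m11)`
by the stated formulas (terms with `m11` out of range being `0`). -/
structure GZ (q : ℝ) (m13 m23 m33 : ℤ) where
  E11 : Wsp m13 m23 m33 →ₗ[ℂ] Wsp m13 m23 m33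
  E22 : Wsp m13 m23 m33 →ₗ[ℂ] Wsp m13 m23 m33
  E33 : Wsp m13 m23 m33 →ₗ[ℂ] Wsp m13 m23 m33
  E12 : Wsp m13 m23 m33 →ₗ[ℂ] Wsp m13 m23 m33
  E21 : Wsp m13 m23 m33 →ₗ[ℂ] Wsp m13 m23 m33
  E23 : Wsp m13 m23 m33 →ₗ[ℂ] Wsp m13 m23 m33
  E32 : Wsp m13 m23 m33 →ₗ[ℂ] Wsp m13 m23 m33
  hE11 : ∀ (k : Fin 4) (x : ℤ), InR m13 m23 m33 k x →
    E11 (bv m13 m23 m33 k x) = (x : ℂ) • bv m13 m23 m33 k x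
  hE22 : ∀ (k : Fin 4) (x : ℤ), InR m13 m23 m33 k x →
    E22 (bv m13 m23 m33 k x) =
      ((M12 m13 m23 m33 k + M22 m13 m23 m33 k - x : ℤ) : ℂ) • bv m13 m23 m33 k x
  hE33 : ∀ (k : Fin 4) (x : ℤ), InR m13 m23 m33 k x →
    E33 (bv m13 m23 m33 k x) = ((M32 m13 m23 m33 k : ℤ) : ℂ) • bv m13 m23 m33 k x
  hE12 : ∀ (k : Fin 4) (x : ℤ), InR m13 m23 m33 k x →
    E12 (bv m13 m23 m33 k x) =
      ((Real.sqrt (qn q (M12 m13 m23 m33 k - x) * qn q (x - M22 m13 m23 m33 k + 1)) : ℝ) : ℂ) •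
        bv m13 m23 m33 k (x + 1)
  hE21 : ∀ (k : Fin 4) (x : ℤ), InR m13 m23 m33 k x →
    E21 (bv m13 m23 m33 k x) =
      ((Real.sqrt (qn q (M12 m13 m23 m33 k - x + 1) * qn q (x - M22 m13 m23 m33 k)) : ℝ) : ℂ) •
        bv m13 m23 m33 k (x - 1)
  hE23₀ : ∀ x : ℤ, InR m13 m23 m33 0 x → E23 (bv m13 m23 m33 0 x) = 0
  hE23₁ : ∀ x : ℤ, InR m13 m23 m33 1 x →
    E23 (bv m13 m23 m33 1 x) =
      ((Real.sqrt (qn q (x - m23 + 1) / qn q (m13 - m23 + 1)) * qn q (m23 + m33) : ℝ) : ℂ) •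
        bv m13 m23 m33 0 x
  hE23₂ : ∀ x : ℤ, InR m13 m23 m33 2 x →
    E23 (bv m13 m23 m33 2 x) =
      ((Real.sqrt (qn q (m13 - x) / qn q (m13 - m23)) * qn q (m13 + m33 + 1) : ℝ) : ℂ) •
        bv m13 m23 m33 0 x
  hE23₃ : ∀ x : ℤ, InR m13 m23 m33 3 x →
    E23 (bv m13 m23 m33 3 x) =
      ((q⁻¹ * Real.sqrt (qn q (m13 - x) / qn q (m13 - m23 + 1)) * qn q (m13 + m33 + 1) : ℝ) : ℂ) •
          bv m13 m23 m33 1 x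
        - ((q⁻¹ * Real.sqrt (qn q (x - m23 + 1) * qn q (m13 - m23)) *
            (qn q (m23 + m33) / qn q (m13 - m23 + 1)) : ℝ) : ℂ) • bv m13 m23 m33 2 x
  hE32₀ : ∀ x : ℤ, InR m13 m23 m33 0 x →
    E32 (bv m13 m23 m33 0 x) =
      ((Real.sqrt (qn q (x - m23 + 1) / qn q (m13 - m23 + 1)) : ℝ) : ℂ) • bv m13 m23 m33 1 x
        + ((Real.sqrt (qn q (m13 - x) * qn q (m13 - m23)) / qn q (m13 - m23 + 1) : ℝ) : ℂ) •
            bv m13 m23 m33 2 x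
  hE32₁ : ∀ x : ℤ, InR m13 m23 m33 1 x →
    E32 (bv m13 m23 m33 1 x) =
      ((q * Real.sqrt (qn q (m13 - x) / qn q (m13 - m23 + 1)) : ℝ) : ℂ) • bv m13 m23 m33 3 x
  hE32₂ : ∀ x : ℤ, InR m13 m23 m33 2 x →
    E32 (bv m13 m23 m33 2 x) =
      -(((q * Real.sqrt (qn q (x - m23 + 1) / qn q (m13 - m23)) : ℝ) : ℂ) • bv m13 m23 m33 3 x)
  hE32₃ : ∀ x : ℤ, InR m13 m23 m33 3 x → E32 (bv m13 m23 m33 3 x) = 0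

/-- The composite odd operator `E13 := E12 E23 − q⁻¹ E23 E12`. -/
def E13op (q : ℝ) (m13 m23 m33 : ℤ) (R : GZ q m13 m23 m33) :
    Wsp m13 m23 m33 →ₗ[ℂ] Wsp m13 m23 m33 :=
  R.E12 ∘ₗ R.E23 - ((q : ℂ)⁻¹) • (R.E23 ∘ₗ R.E12)

/-- The composite odd operator `E31 := −(E21 E32 − q⁻¹ E32 E21)`. -/
def E31op (q : ℝ) (m13 m23 m33 : ℤ) (R : GZ q m13 m23 m33) :
    Wsp m13 m23 m33 →ₗ[ℂ] Wsp m13 m23 m33 :=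
  -(R.E21 ∘ₗ R.E32 - ((q : ℂ)⁻¹) • (R.E32 ∘ₗ R.E21))

/-! ### The `q`-numbers -/

lemma qn_zero (q : ℝ) : qn q 0 = 0 := by simp [qn]

lemma qn_nonneg {q : ℝ} (hq : 0 < q) {x : ℤ} (hx : 0 ≤ x) : 0 ≤ qn q x := by
  unfold qn
  rcases le_total 1 q with h | h
  · apply div_nonneg
    · exact sub_nonneg.2 (zpow_le_zpow_right₀ h (by omega))
    · exact sub_nonneg.2 ((inv_le_one_of_one_le₀ h).trans h)
  · apply div_nonneg_of_nonpos
    · exact sub_nonpos.2 (zpow_le_zpow_right_of_le_one₀ hq h (by omega))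
    · exact sub_nonpos.2 (h.trans ((one_le_inv₀ hq).2 h))

lemma sub_inv_ne_zero' {q : ℝ} (hq : 0 < q) (hq1 : q ≠ 1) : q - q⁻¹ ≠ 0 := by
  intro h
  field_simp at h
  have h2 : (q - 1) * (q + 1) = 0 := by linarith
  rcases mul_eq_zero.1 h2 with h3 | h3
  · exact hq1 (by linarith)
  · linarith

lemma qn_ne_zero {q : ℝ} (hq : 0 < q) (hq1 : q ≠ 1) {x : ℤ} (hx : x ≠ 0) : qn q x ≠ 0 := by
  unfold qn
  refine div_ne_zero (fun h => ?_) (sub_inv_ne_zero' hq hq1)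
  have := zpow_right_injective₀ hq hq1 (sub_eq_zero.1 h)
  omega

lemma qn_rec {q : ℝ} (hq : 0 < q) (x : ℤ) :
    qn q x + qn q (x + 2) = (q + q⁻¹) * qn q (x + 1) := by
  have h0 : q ≠ 0 := hq.ne'
  have h1 : q ^ (-(x + 1)) = (q ^ x)⁻¹ * q⁻¹ := by
    rw [zpow_neg, zpow_add₀ h0, zpow_one, mul_inv]
  have h2 : q ^ (-(x + 2)) = (q ^ x)⁻¹ * (q⁻¹ * q⁻¹) := by
    rw [zpow_neg, zpow_add₀ h0, mul_inv, zpow_ofNat, sq, mul_inv]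
  have hc : q * q⁻¹ = 1 := mul_inv_cancel₀ h0
  unfold qn
  rw [h1, h2, zpow_neg, zpow_add₀ h0, zpow_add₀ h0, zpow_one, zpow_ofNat, ← add_div,
    ← mul_div_assoc]
  congr 1
  linear_combination ((q ^ x)⁻¹ - q ^ x) * hc

/-! ### The two families of square roots -/

/-- The factor `√[x - m23 + 1]` of the matrix elements. -/
def rt (q : ℝ) (m23 x : ℤ) : ℂ := ((Real.sqrt (qn q (x - m23 + 1)) : ℝ) : ℂ)

/-- The factor `√[m13 - x]` of the matrix elements. -/
def tt (q : ℝ) (m13 x : ℤ) : ℂ := ((Real.sqrt (qn q (m13 - x)) : ℝ) : ℂ)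

lemma rt_bot (q : ℝ) (m23 : ℤ) : rt q m23 (m23 - 1) = 0 := by simp [rt, qn_zero]

lemma tt_top (q : ℝ) (m13 : ℤ) : tt q m13 m13 = 0 := by simp [tt, qn_zero]

lemma rt_sq {q : ℝ} (hq : 0 < q) {m23 x : ℤ} (h : m23 - 1 ≤ x) :
    rt q m23 x ^ 2 = ((qn q (x - m23 + 1) : ℝ) : ℂ) := by
  unfold rt
  rw [← Complex.ofReal_pow, Real.sq_sqrt (qn_nonneg hq (by omega))]

lemma tt_sq {q : ℝ} (hq : 0 < q) {m13 x : ℤ} (h : x ≤ m13) :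
    tt q m13 x ^ 2 = ((qn q (m13 - x) : ℝ) : ℂ) := by
  unfold tt
  rw [← Complex.ofReal_pow, Real.sq_sqrt (qn_nonneg hq (by omega))]

/-- The three-term recurrence of `q`-numbers, written for the squares of `rt`. -/
lemma rt_rec {q : ℝ} (hq : 0 < q) {m23 x y z : ℤ} (h : m23 - 1 ≤ x) (hy : y = x + 1)
    (hz : z = x + 2) :
    rt q m23 x ^ 2 + rt q m23 z ^ 2 = ((q : ℂ) + (q : ℂ)⁻¹) * rt q m23 y ^ 2 := by
  subst hy hz
  rw [rt_sq hq h, rt_sq hq (by omega), rt_sq hq (by omega)]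
  have := qn_rec hq (x - m23 + 1)
  rw [show x + 2 - m23 + 1 = x - m23 + 1 + 2 by ring,
    show x + 1 - m23 + 1 = x - m23 + 1 + 1 by ring]
  exact_mod_cast this

/-- The three-term recurrence of `q`-numbers, written for the squares of `tt`. -/
lemma tt_rec {q : ℝ} (hq : 0 < q) {m13 x y z : ℤ} (h : z ≤ m13) (hy : y = x + 1)
    (hz : z = x + 2) :
    tt q m13 x ^ 2 + tt q m13 z ^ 2 = ((q : ℂ) + (q : ℂ)⁻¹) * tt q m13 y ^ 2 := by
  subst hy hz
  rw [tt_sq hq h, tt_sq hq (by omega), tt_sq hq (by omega)]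
  have := qn_rec hq (m13 - (x + 2))
  rw [show m13 - (x + 2) + 2 = m13 - x by ring,
    show m13 - (x + 2) + 1 = m13 - (x + 1) by ring] at this
  rw [add_comm]
  exact_mod_cast this

/-! ### The operators in factorized form, valid for every integer `m11` -/

lemma bv_out {m13 m23 m33 : ℤ} {k : Fin 4} {x : ℤ} (h : ¬ InR m13 m23 m33 k x) :
    bv m13 m23 m33 k x = 0 := dif_neg h

lemma inR_zero {m13 m23 m33 x : ℤ} : InR m13 m23 m33 0 x ↔ m23 ≤ x ∧ x ≤ m13 := Iff.rfl
lemma inR_one {m13 m23 m33 x : ℤ} : InR m13 m23 m33 1 x ↔ m23 - 1 ≤ x ∧ x ≤ m13 := Iff.rfl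
lemma inR_two {m13 m23 m33 x : ℤ} : InR m13 m23 m33 2 x ↔ m23 ≤ x ∧ x ≤ m13 - 1 := Iff.rfl
lemma inR_three {m13 m23 m33 x : ℤ} :
    InR m13 m23 m33 3 x ↔ m23 - 1 ≤ x ∧ x ≤ m13 - 1 := Iff.rfl

lemma smul_bv_congr {m13 m23 m33 : ℤ} {k : Fin 4} {x : ℤ} {a b : ℂ}
    (h : InR m13 m23 m33 k x → a = b) :
    a • bv m13 m23 m33 k x = b • bv m13 m23 m33 k x := by
  by_cases hx : InR m13 m23 m33 k x
  · rw [h hx]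
  · rw [bv_out hx, smul_zero, smul_zero]

/-- Out of range both sides vanish: when `x + 1` is in range but `x` is not,
`x - m22 + 1 = 0`. -/
lemma E12_bv {q : ℝ} (hq : 0 < q) {m13 m23 m33 : ℤ} (R : GZ q m13 m23 m33) (k : Fin 4) (x : ℤ) :
    R.E12 (bv m13 m23 m33 k x) =
      (tt q (M12 m13 m23 m33 k) x * rt q (M22 m13 m23 m33 k) x) • bv m13 m23 m33 k (x + 1) := by
  by_cases h : InR m13 m23 m33 k x
  · rw [R.hE12 k x h, Real.sqrt_mul' _ (qn_nonneg hq (by have := h.1; omega)),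
      Complex.ofReal_mul]
    rfl
  · rw [bv_out h, map_zero]
    symm
    rw [← zero_smul ℂ (bv m13 m23 m33 k (x + 1))]
    refine smul_bv_congr fun h' => ?_
    have : x = M22 m13 m23 m33 k - 1 := by
      have := h'.1; have := h'.2
      by_contra hne
      exact h ⟨by omega, by omega⟩
    rw [this, rt_bot, mul_zero]

/-- Out of range both sides vanish: when `x - 1` is in range but `x` is not,
`m12 - x + 1 = 0`. -/
lemma E21_bv {q : ℝ} (hq : 0 < q) {m13 m23 m33 : ℤ} (R : GZ q m13 m23 m33) (k : Fin 4) (x : ℤ) :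
    R.E21 (bv m13 m23 m33 k x) =
      (tt q (M12 m13 m23 m33 k) (x - 1) * rt q (M22 m13 m23 m33 k) (x - 1)) •
        bv m13 m23 m33 k (x - 1) := by
  by_cases h : InR m13 m23 m33 k x
  · rw [R.hE21 k x h, Real.sqrt_mul' _ (qn_nonneg hq (by have := h.1; omega)),
      Complex.ofReal_mul, tt, rt, sub_sub_eq_add_sub, sub_right_comm, sub_add_cancel,
      add_sub_right_comm]
  · rw [bv_out h, map_zero]
    symm
    rw [← zero_smul ℂ (bv m13 m23 m33 k (x - 1))]
    refine smul_bv_congr fun h' => ?_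
    have : x - 1 = M12 m13 m23 m33 k := by
      have := h'.1; have := h'.2
      by_contra hne
      exact h ⟨by omega, by omega⟩
    rw [this, tt_top, zero_mul]

lemma tt_pred (q : ℝ) (m13 x : ℤ) : tt q (m13 - 1) x = tt q m13 (x + 1) := by
  unfold tt; rw [show m13 - 1 - x = m13 - (x + 1) by ring]

lemma rt_pred (q : ℝ) (m23 x : ℤ) : rt q (m23 - 1) x = rt q m23 (x + 1) := by
  unfold rt; rw [show x - (m23 - 1) + 1 = x + 1 - m23 + 1 by ring]

section Action

variable {q : ℝ} {m13 m23 m33 : ℤ}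

lemma E12_zero (hq : 0 < q) (R : GZ q m13 m23 m33) (x : ℤ) :
    R.E12 (bv m13 m23 m33 0 x) = (tt q m13 x * rt q m23 x) • bv m13 m23 m33 0 (x + 1) :=
  E12_bv hq R 0 x

lemma E12_one (hq : 0 < q) (R : GZ q m13 m23 m33) (x : ℤ) :
    R.E12 (bv m13 m23 m33 1 x) = (tt q m13 x * rt q m23 (x + 1)) • bv m13 m23 m33 1 (x + 1) := by
  rw [← rt_pred]; exact E12_bv hq R 1 x

lemma E12_two (hq : 0 < q) (R : GZ q m13 m23 m33) (x : ℤ) :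
    R.E12 (bv m13 m23 m33 2 x) = (tt q m13 (x + 1) * rt q m23 x) • bv m13 m23 m33 2 (x + 1) := by
  rw [← tt_pred]; exact E12_bv hq R 2 x

lemma E12_three (hq : 0 < q) (R : GZ q m13 m23 m33) (x : ℤ) :
    R.E12 (bv m13 m23 m33 3 x) =
      (tt q m13 (x + 1) * rt q m23 (x + 1)) • bv m13 m23 m33 3 (x + 1) := by
  rw [← tt_pred, ← rt_pred]; exact E12_bv hq R 3 x

lemma E21_zero (hq : 0 < q) (R : GZ q m13 m23 m33) (x : ℤ) :
    R.E21 (bv m13 m23 m33 0 x) =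
      (tt q m13 (x - 1) * rt q m23 (x - 1)) • bv m13 m23 m33 0 (x - 1) :=
  E21_bv hq R 0 x

lemma E21_one (hq : 0 < q) (R : GZ q m13 m23 m33) (x : ℤ) :
    R.E21 (bv m13 m23 m33 1 x) = (tt q m13 (x - 1) * rt q m23 x) • bv m13 m23 m33 1 (x - 1) := by
  have := E21_bv hq R 1 x
  rwa [show M22 m13 m23 m33 1 = m23 - 1 from rfl, rt_pred, sub_add_cancel] at this

lemma E21_two (hq : 0 < q) (R : GZ q m13 m23 m33) (x : ℤ) :
    R.E21 (bv m13 m23 m33 2 x) = (tt q m13 x * rt q m23 (x - 1)) • bv m13 m23 m33 2 (x - 1) := by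
  have := E21_bv hq R 2 x
  rwa [show M12 m13 m23 m33 2 = m13 - 1 from rfl, tt_pred, sub_add_cancel] at this

lemma E21_three (hq : 0 < q) (R : GZ q m13 m23 m33) (x : ℤ) :
    R.E21 (bv m13 m23 m33 3 x) = (tt q m13 x * rt q m23 x) • bv m13 m23 m33 3 (x - 1) := by
  have := E21_bv hq R 3 x
  rwa [show M12 m13 m23 m33 3 = m13 - 1 from rfl, show M22 m13 m23 m33 3 = m23 - 1 from rfl,
    tt_pred, rt_pred, sub_add_cancel] at this

/-- The odd operators `E23` and `E32` in factorized form: each matrix element is a constant times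
`√[m13 - x]` or `√[x - m23 + 1]`, the formulas hold for every integer `x`, and the constants make
the compositions `E23 ∘ E23` and `E32 ∘ E32` cancel as soon as `m23 < m13`. -/
lemma odd_action (hq : 0 < q) (hq1 : q ≠ 1) (hm : m23 ≤ m13) (R : GZ q m13 m23 m33) :
    (∀ x, R.E23 (bv m13 m23 m33 0 x) = 0) ∧
    (∃ a b c d : ℂ, (m23 < m13 → a * c = b * d) ∧
      (∀ x, R.E23 (bv m13 m23 m33 1 x) = (a * rt q m23 x) • bv m13 m23 m33 0 x) ∧
      (∀ x, R.E23 (bv m13 m23 m33 2 x) = (b * tt q m13 x) • bv m13 m23 m33 0 x) ∧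
      (∀ x, R.E23 (bv m13 m23 m33 3 x) = (c * tt q m13 x) • bv m13 m23 m33 1 x -
        (d * rt q m23 x) • bv m13 m23 m33 2 x)) ∧
    (∀ x, R.E32 (bv m13 m23 m33 3 x) = 0) ∧
    (∃ a b c d : ℂ, (m23 < m13 → a * c = b * d) ∧
      (∀ x, R.E32 (bv m13 m23 m33 0 x) = (a * rt q m23 x) • bv m13 m23 m33 1 x +
        (b * tt q m13 x) • bv m13 m23 m33 2 x) ∧
      (∀ x, R.E32 (bv m13 m23 m33 1 x) = (c * tt q m13 x) • bv m13 m23 m33 3 x) ∧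
      (∀ x, R.E32 (bv m13 m23 m33 2 x) = -((d * rt q m23 x) • bv m13 m23 m33 3 x))) := by
  have hN : 0 ≤ qn q (m13 - m23) := qn_nonneg hq (by omega)
  have hN1 : 0 ≤ qn q (m13 - m23 + 1) := qn_nonneg hq (by omega)
  have hN1' : qn q (m13 - m23 + 1) ≠ 0 := qn_ne_zero hq hq1 (by omega)
  have hs1 : Real.sqrt (qn q (m13 - m23 + 1)) ^ 2 = qn q (m13 - m23 + 1) := Real.sq_sqrt hN1
  have hs1' : Real.sqrt (qn q (m13 - m23 + 1)) ≠ 0 := (Real.sqrt_ne_zero hN1).2 hN1'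
  have hs' : m23 < m13 → Real.sqrt (qn q (m13 - m23)) ≠ 0 := fun h =>
    (Real.sqrt_ne_zero hN).2 (qn_ne_zero hq hq1 (by omega))
  -- The only out-of-range targets are the edges of the sectors, where `tt` or `rt` vanishes.
  have rt_edge : ∀ x, x = m23 - 1 → rt q m23 x = 0 := fun x h => h ▸ rt_bot q m23
  have tt_edge : ∀ x, x = m13 → tt q m13 x = 0 := fun x h => h ▸ tt_top q m13
  refine ⟨fun x => ?_, ⟨
      ((qn q (m23 + m33) / Real.sqrt (qn q (m13 - m23 + 1)) : ℝ) : ℂ),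
      ((qn q (m13 + m33 + 1) / Real.sqrt (qn q (m13 - m23)) : ℝ) : ℂ),
      ((q⁻¹ * qn q (m13 + m33 + 1) / Real.sqrt (qn q (m13 - m23 + 1)) : ℝ) : ℂ),
      ((q⁻¹ * Real.sqrt (qn q (m13 - m23)) *
        (qn q (m23 + m33) / qn q (m13 - m23 + 1)) : ℝ) : ℂ),
      fun h => ?_, fun x => ?_, fun x => ?_, fun x => ?_⟩, fun x => ?_, ⟨
      ((1 / Real.sqrt (qn q (m13 - m23 + 1)) : ℝ) : ℂ),
      ((Real.sqrt (qn q (m13 - m23)) / qn q (m13 - m23 + 1) : ℝ) : ℂ),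
      ((q / Real.sqrt (qn q (m13 - m23 + 1)) : ℝ) : ℂ),
      ((q / Real.sqrt (qn q (m13 - m23)) : ℝ) : ℂ),
      fun h => ?_, fun x => ?_, fun x => ?_, fun x => ?_⟩⟩
  · by_cases h : InR m13 m23 m33 0 x
    · exact R.hE23₀ x h
    · rw [bv_out h, map_zero]
  · have := hs' h
    rw [← Complex.ofReal_mul, ← Complex.ofReal_mul]
    congr 1
    generalize Real.sqrt (qn q (m13 - m23 + 1)) = s at hs1 hs1' ⊢
    rw [← hs1]
    field_simp
  · by_cases h : InR m13 m23 m33 1 x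
    · rw [R.hE23₁ x h, Real.sqrt_div' _ hN1]
      congr 1
      unfold rt
      push_cast
      ring
    · rw [bv_out h, map_zero, bv_out, smul_zero]
      rw [inR_one] at h
      rw [inR_zero]
      omega
  · by_cases h : InR m13 m23 m33 2 x
    · rw [R.hE23₂ x h, Real.sqrt_div' _ hN]
      congr 1
      unfold tt
      push_cast
      ring
    · rw [bv_out h, map_zero, ← zero_smul ℂ (bv m13 m23 m33 0 x)]
      refine smul_bv_congr fun h' => ?_
      rw [inR_two] at h
      rw [inR_zero] at h'
      rw [tt_edge x (by omega), mul_zero]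
  · by_cases h : InR m13 m23 m33 3 x
    · rw [R.hE23₃ x h, Real.sqrt_div' _ hN1, Real.sqrt_mul' _ hN]
      congr 2
      · unfold tt
        push_cast
        ring
      · unfold rt
        push_cast
        ring
    · rw [inR_three] at h
      have h1 : (bv m13 m23 m33 2 x) = 0 := bv_out (by rw [inR_two]; omega)
      rw [bv_out (k := 3) h, map_zero, h1, smul_zero, sub_zero,
        ← zero_smul ℂ (bv m13 m23 m33 1 x)]
      refine smul_bv_congr fun h' => ?_
      rw [inR_one] at h'
      rw [tt_edge x (by omega), mul_zero]
  · by_cases h : InR m13 m23 m33 3 x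
    · exact R.hE32₃ x h
    · rw [bv_out h, map_zero]
  · have := hs' h
    rw [← Complex.ofReal_mul, ← Complex.ofReal_mul]
    congr 1
    generalize Real.sqrt (qn q (m13 - m23 + 1)) = s at hs1 hs1' ⊢
    rw [← hs1]
    field_simp
  · by_cases h : InR m13 m23 m33 0 x
    · rw [R.hE32₀ x h, Real.sqrt_div' _ hN1, Real.sqrt_mul' _ hN]
      congr 2
      · unfold rt
        push_cast
        ring
      · unfold tt
        push_cast
        ring
    · rw [inR_zero] at h
      have h1 : (bv m13 m23 m33 2 x) = 0 := bv_out (by rw [inR_two]; omega)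
      rw [bv_out (k := 0) h, map_zero, h1, smul_zero, add_zero,
        ← zero_smul ℂ (bv m13 m23 m33 1 x)]
      refine smul_bv_congr fun h' => ?_
      rw [inR_one] at h'
      rw [rt_edge x (by omega), mul_zero]
  · by_cases h : InR m13 m23 m33 1 x
    · rw [R.hE32₁ x h, Real.sqrt_div' _ hN1]
      congr 1
      unfold tt
      push_cast
      ring
    · rw [bv_out h, map_zero, bv_out, smul_zero]
      rw [inR_one] at h
      rw [inR_three]
      omega
  · by_cases h : InR m13 m23 m33 2 x
    · rw [R.hE32₂ x h, Real.sqrt_div' _ hN]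
      congr 2
      unfold rt
      push_cast
      ring
    · rw [bv_out h, map_zero, eq_comm, neg_eq_zero, ← zero_smul ℂ (bv m13 m23 m33 3 x)]
      refine smul_bv_congr fun h' => ?_
      rw [inR_two] at h
      rw [inR_three] at h'
      rw [rt_edge x (by omega), mul_zero]

lemma hom_ext_bv {f g : Wsp m13 m23 m33 →ₗ[ℂ] Wsp m13 m23 m33}
    (h : ∀ (k : Fin 4) (x : ℤ), InR m13 m23 m33 k x →
      f (bv m13 m23 m33 k x) = g (bv m13 m23 m33 k x)) : f = g := by
  refine Finsupp.lhom_ext' fun ⟨⟨k, x⟩, hx⟩ => LinearMap.ext_ring ?_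
  have := h k x hx
  rw [bv, dif_pos hx] at this
  exact this

lemma smul_bv_eq_zero {k : Fin 4} {x : ℤ} {a : ℂ} (h : InR m13 m23 m33 k x → a = 0) :
    a • bv m13 m23 m33 k x = 0 := by
  rw [smul_bv_congr h, zero_smul]

/-! ### Cubic Serre relations and squares of the simple odd generators -/

lemma serre_raise (hq : 0 < q) (hq1 : q ≠ 1) (hm : m23 ≤ m13) (R : GZ q m13 m23 m33) :
    R.E12 * R.E12 * R.E23 + R.E23 * R.E12 * R.E12 =
      ((q : ℂ) + (q : ℂ)⁻¹) • (R.E12 * R.E23 * R.E12) := by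
  obtain ⟨h0, ⟨a, b, c, d, -, h1, h2, h3⟩, -⟩ := odd_action hq hq1 hm R
  refine hom_ext_bv fun k x hx => ?_
  rw [← sub_eq_zero]
  have e : x + 1 + 1 = x + 2 := by ring
  fin_cases k
  · simp [h0, E12_zero hq R]
  · have hr := rt_rec hq (m23 := m23) (x := x) hx.1 rfl rfl
    simp [h1, E12_zero hq R, E12_one hq R, smul_smul, ← add_smul, ← sub_smul, e,
      -smul_eq_zero]
    refine smul_bv_eq_zero fun _ => ?_
    linear_combination a * tt q m13 x * tt q m13 (x + 1) * rt q m23 (x + 1) * hr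
  · simp [h2, E12_zero hq R, E12_two hq R, smul_smul, ← add_smul, ← sub_smul, e,
      -smul_eq_zero]
    refine smul_bv_eq_zero fun h => ?_
    have ht := tt_rec hq (m13 := m13) (x := x) h.2 rfl rfl
    linear_combination b * rt q m23 x * rt q m23 (x + 1) * tt q m13 (x + 1) * ht
  · have hr := rt_rec hq (m23 := m23) (x := x) hx.1 rfl rfl
    have hA : (c * rt q m23 (x + 1) * rt q m23 (x + 2) * tt q m13 (x + 1) *
        (tt q m13 x ^ 2 + tt q m13 (x + 2) ^ 2 -
          ((q : ℂ) + (q : ℂ)⁻¹) * tt q m13 (x + 1) ^ 2)) • bv m13 m23 m33 1 (x + 2) = 0 :=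
      smul_bv_eq_zero fun h => by
        rw [tt_rec hq (m13 := m13) (x := x) h.2 rfl rfl, sub_self, mul_zero]
    have hB : (d * tt q m13 (x + 1) * tt q m13 (x + 2) * rt q m23 (x + 1) *
        (rt q m23 x ^ 2 + rt q m23 (x + 2) ^ 2 -
          ((q : ℂ) + (q : ℂ)⁻¹) * rt q m23 (x + 1) ^ 2)) • bv m13 m23 m33 2 (x + 2) = 0 := by
      rw [hr, sub_self, mul_zero, zero_smul]
    rw [← sub_self (0 : Wsp m13 m23 m33)]
    nth_rewrite 1 [← hA]
    rw [← hB]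
    simp [h3, E12_one hq R, E12_two hq R, E12_three hq R, e, -smul_eq_zero]
    module

lemma serre_lower (hq : 0 < q) (hq1 : q ≠ 1) (hm : m23 ≤ m13) (R : GZ q m13 m23 m33) :
    R.E21 * R.E21 * R.E32 + R.E32 * R.E21 * R.E21 =
      ((q : ℂ) + (q : ℂ)⁻¹) • (R.E21 * R.E32 * R.E21) := by
  obtain ⟨-, -, h3, ⟨a, b, c, d, -, h0, h1, h2⟩⟩ := odd_action hq hq1 hm R
  refine hom_ext_bv fun k x hx => ?_
  rw [← sub_eq_zero]
  have e : x - 1 - 1 = x - 2 := by ring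
  have e1 : x - 1 = x - 2 + 1 := by ring
  have e2 : x = x - 2 + 2 := by ring
  fin_cases k
  · have ht := tt_rec hq (m13 := m13) hx.2 e1 e2
    have hA : (a * tt q m13 (x - 1) * tt q m13 (x - 2) * rt q m23 (x - 1) *
        (rt q m23 (x - 2) ^ 2 + rt q m23 x ^ 2 -
          ((q : ℂ) + (q : ℂ)⁻¹) * rt q m23 (x - 1) ^ 2)) • bv m13 m23 m33 1 (x - 2) = 0 :=
      smul_bv_eq_zero fun h => by
        rw [rt_rec hq (m23 := m23) h.1 e1 e2, sub_self, mul_zero]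
    have hB : (b * rt q m23 (x - 1) * rt q m23 (x - 2) * tt q m13 (x - 1) *
        (tt q m13 (x - 2) ^ 2 + tt q m13 x ^ 2 -
          ((q : ℂ) + (q : ℂ)⁻¹) * tt q m13 (x - 1) ^ 2)) • bv m13 m23 m33 2 (x - 2) = 0 := by
      rw [ht, sub_self, mul_zero, zero_smul]
    rw [← add_zero (0 : Wsp m13 m23 m33)]
    nth_rewrite 1 [← hA]
    rw [← hB]
    simp [h0, E21_zero hq R, E21_one hq R, E21_two hq R, e, -smul_eq_zero]
    module
  · have ht := tt_rec hq (m13 := m13) hx.2 e1 e2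
    simp [h1, E21_one hq R, E21_three hq R, smul_smul, ← add_smul, ← sub_smul, e,
      -smul_eq_zero]
    refine smul_bv_eq_zero fun _ => ?_
    linear_combination c * rt q m23 x * rt q m23 (x - 1) * tt q m13 (x - 1) * ht
  · have hA : (d * tt q m13 x * tt q m13 (x - 1) * rt q m23 (x - 1) *
        (rt q m23 (x - 2) ^ 2 + rt q m23 x ^ 2 -
          ((q : ℂ) + (q : ℂ)⁻¹) * rt q m23 (x - 1) ^ 2)) • bv m13 m23 m33 3 (x - 2) = 0 :=
      smul_bv_eq_zero fun h => by
        rw [rt_rec hq (m23 := m23) h.1 e1 e2, sub_self, mul_zero]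
    rw [← neg_zero, ← hA]
    simp [h2, E21_two hq R, E21_three hq R, e, -smul_eq_zero]
    module
  · simp [h3, E21_three hq R]

/-- For `m13 = m23` the constants need not match, but then the only basis vector `v(0, m13)` is
multiplied by `√[m13 - m13] = 0`. -/
lemma E23_sq (hq : 0 < q) (hq1 : q ≠ 1) (hm : m23 ≤ m13) (R : GZ q m13 m23 m33) :
    R.E23 * R.E23 = 0 := by
  obtain ⟨h0, ⟨a, b, c, d, habcd, h1, h2, h3⟩, -⟩ := odd_action hq hq1 hm R
  refine hom_ext_bv fun k x hx => ?_
  fin_cases k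
  · simp [h0]
  · simp [h0, h1]
  · simp [h0, h2]
  · simp [h1, h2, h3, smul_smul, ← sub_smul, -smul_eq_zero]
    refine smul_bv_eq_zero fun h => ?_
    rw [inR_zero] at h
    rcases hm.lt_or_eq with hlt | heq
    · linear_combination tt q m13 x * rt q m23 x * habcd hlt
    · rw [show x = m13 by omega, tt_top]
      ring

/-- For `m13 = m23` the constants need not match, but then the only basis vector `v(3, m23 - 1)`
is multiplied by `√[(m23 - 1) - m23 + 1] = 0`. -/
lemma E32_sq (hq : 0 < q) (hq1 : q ≠ 1) (hm : m23 ≤ m13) (R : GZ q m13 m23 m33) :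
    R.E32 * R.E32 = 0 := by
  obtain ⟨-, -, h3, ⟨a, b, c, d, habcd, h0, h1, h2⟩⟩ := odd_action hq hq1 hm R
  refine hom_ext_bv fun k x hx => ?_
  fin_cases k
  · simp [h0, h1, h2, smul_smul, ← sub_eq_add_neg, ← sub_smul, -smul_eq_zero]
    refine smul_bv_eq_zero fun h => ?_
    rw [inR_three] at h
    rcases hm.lt_or_eq with hlt | heq
    · linear_combination tt q m13 x * rt q m23 x * habcd hlt
    · rw [show x = m23 - 1 by omega, rt_bot]
      ring
  · simp [h1, h3]
  · simp [h2, h3]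
  · simp [h3]

end Action

/-! ### From the Serre relation to the vanishing square -/

/-- In an associative algebra, `e² = 0` and the cubic relation
`a² e + e a² = (q + q⁻¹) a e a` force the `q`-commutator of `a` and `e` to square to zero:
multiplying the cubic relation by `e` on either side gives
`e a² e = (q + q⁻¹) e a e a = (q + q⁻¹) a e a e`. -/
lemma qcomm_sq {A : Type*} [Ring A] [Algebra ℂ A] {q : ℂ} (hq : q ≠ 0) (hs : q + q⁻¹ ≠ 0)
    {a e : A} (he : e * e = 0) (h : a * a * e + e * a * a = (q + q⁻¹) • (a * e * a)) :
    (a * e - q⁻¹ • (e * a)) * (a * e - q⁻¹ • (e * a)) = 0 := by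
  have hl : e * a * a * e = (q + q⁻¹) • (e * a * e * a) := by
    have := congrArg (e * ·) h
    simpa [mul_add, ← mul_assoc, he] using this
  have hr : e * a * a * e = (q + q⁻¹) • (a * e * a * e) := by
    have := congrArg (· * e) h
    simpa [add_mul, mul_assoc, he] using this
  have hT : e * a * e * a = a * e * a * e := smul_right_injective A hs (hl.symm.trans hr)
  have h0 : a * e * (e * a) = 0 := by rw [mul_assoc, ← mul_assoc e, he, zero_mul, mul_zero]
  have e1 : a * e * (a * e) = a * e * a * e := by simp only [mul_assoc]
  have e2 : e * a * (a * e) = e * a * a * e := by simp only [mul_assoc]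
  have e3 : e * a * (e * a) = a * e * a * e := by rw [← hT]; simp only [mul_assoc]
  simp only [sub_mul, mul_sub, smul_mul_assoc, mul_smul_comm, h0, e1, e2, e3, hr, smul_smul]
  match_scalars
  field_simp
  ring

/-- The cubic relation is the `q`-Serre relation between `a` and the `q`-commutator. -/
lemma serre_qcomm {A : Type*} [Ring A] [Algebra ℂ A] {q : ℂ} (hq : q ≠ 0)
    {a e : A} (h : a * a * e + e * a * a = (q + q⁻¹) • (a * e * a)) :
    a * (a * e - q⁻¹ • (e * a)) - q • ((a * e - q⁻¹ • (e * a)) * a) = 0 := by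
  have h' : a * a * e = (q + q⁻¹) • (a * e * a) - e * a * a := eq_sub_of_add_eq h
  simp only [mul_sub, sub_mul, smul_mul_assoc, mul_smul_comm, ← mul_assoc, h', smul_sub, smul_smul]
  match_scalars <;> field_simp <;> ring

lemma qserre_neg {A : Type*} [Ring A] [Algebra ℂ A] {q : ℂ} {a b : A}
    (h : a * b - q • (b * a) = 0) : a * -b - q • (-b * a) = 0 := by
  rw [mul_neg, neg_mul, smul_neg, ← neg_sub', h, neg_zero]

lemma sq_neg_eq_zero {A : Type*} [Ring A] {b : A} (h : b * b = 0) : -b * -b = 0 := by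
  rw [neg_mul_neg, h]

/-- With `E13 := E12 E23 − q⁻¹ E23 E12` and
`E31 := −(E21 E32 − q⁻¹ E32 E21)`, the q-Serre relations hold as operator
identities on `W`: `E12 E13 − q E13 E12 = 0` and `E21 E31 − q E31 E21 = 0`;
moreover `E13 ∘ E13 = 0` and `E31 ∘ E31 = 0`. -/
theorem stmt_8 (q : ℝ) (hq : 0 < q) (hq1 : q ≠ 1)
    (m13 m23 m33 : ℤ) (hm : m23 ≤ m13) (R : GZ q m13 m23 m33) :
    R.E12 ∘ₗ E13op q m13 m23 m33 R - (q : ℂ) • (E13op q m13 m23 m33 R ∘ₗ R.E12) = 0 ∧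
    R.E21 ∘ₗ E31op q m13 m23 m33 R - (q : ℂ) • (E31op q m13 m23 m33 R ∘ₗ R.E21) = 0 ∧
    E13op q m13 m23 m33 R ∘ₗ E13op q m13 m23 m33 R = 0 ∧
    E31op q m13 m23 m33 R ∘ₗ E31op q m13 m23 m33 R = 0 := by
  have hq0 : (q : ℂ) ≠ 0 := Complex.ofReal_ne_zero.2 hq.ne'
  have hs : (q : ℂ) + (q : ℂ)⁻¹ ≠ 0 := by
    have : q + q⁻¹ ≠ 0 := by positivity
    exact_mod_cast this
  have hR := serre_raise hq hq1 hm R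
  have hL := serre_lower hq hq1 hm R
  -- In `Module.End ℂ W` the product is, by definition, composition of linear maps.
  have hSR := serre_qcomm (A := Module.End ℂ (Wsp m13 m23 m33)) hq0 hR
  have hSL := serre_qcomm (A := Module.End ℂ (Wsp m13 m23 m33)) hq0 hL
  have hQR := qcomm_sq (A := Module.End ℂ (Wsp m13 m23 m33)) hq0 hs (E23_sq hq hq1 hm R) hR
  have hQL := qcomm_sq (A := Module.End ℂ (Wsp m13 m23 m33)) hq0 hs (E32_sq hq hq1 hm R) hL
  have hNL := qserre_neg hSL
  have hNQL := sq_neg_eq_zero hQL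
  exact ⟨hSR, hNL, hQR, hNQL⟩
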